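/- Let h : Ω → (U, σ²|dz|²) be smooth with h_w = √φ e^{ω + iψ}/σ(h) and h̄_w = conj(√φ) e^{−ω + iψ}/σ(h), where φ is holomorphic and nonvanishing with holomorphic square root √φ = |φ|^{1/2} e^{iβ}, and ω, ψ smooth real functions. If h is harmonic, i.e. h_{w w̄} + 2 (log σ)_z(h) h_w h_{w̄} = 0, then (ω + iψ)_{w̄} = (log σ)_{z̄}(h) · conj(h)_{w̄} − (log σ)_z(h) · h_{w̄}. -/

import Mathlib

/-!
The identity is logarithmic differentiation of `h_w = s e^{ω+iψ} / σ(h)` in `w̄`. Since `s` is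
holomorphic it does not contribute, so `h_{w w̄} = h_w ((ω+iψ)_w̄ - (log σ ∘ h)_w̄)`
(`wdzbar_mul_exp`). The chain rule gives
`(log σ ∘ h)_w̄ = (log σ)_z(h) h_w̄ + (log σ)_z̄(h) h̄_w̄` (`wdzbar_ofReal_comp`), and harmonicity
says that `h_{w w̄} = -2 (log σ)_z(h) h_w h_w̄`. Dividing by `h_w`, which vanishes nowhere on `Ω`
because `s² = φ ≠ 0`, gives the claim.
-/

open Complex

noncomputable section

/-- Wirtinger derivative `∂/∂w`. -/
def wdz (f : ℂ → ℂ) (w : ℂ) : ℂ :=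
  (fderiv ℝ f w 1 - Complex.I * fderiv ℝ f w Complex.I) / 2

/-- Wirtinger derivative `∂/∂w̄`. -/
def wdzbar (f : ℂ → ℂ) (w : ℂ) : ℂ :=
  (fderiv ℝ f w 1 + Complex.I * fderiv ℝ f w Complex.I) / 2

/-- Wirtinger derivative `∂/∂z` of a real function (used for `log σ` in the target). -/
def wdzR (f : ℂ → ℝ) (z : ℂ) : ℂ :=
  ((fderiv ℝ f z 1 : ℝ) - Complex.I * (fderiv ℝ f z Complex.I : ℝ)) / 2

/-- Wirtinger derivative `∂/∂z̄` of a real function. -/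
def wdzbarR (f : ℂ → ℝ) (z : ℂ) : ℂ :=
  ((fderiv ℝ f z 1 : ℝ) + Complex.I * (fderiv ℝ f z Complex.I : ℝ)) / 2

/-- A holomorphic factor `s` behaves as a constant under `∂/∂w̄`. -/
lemma wdzbar_mul_exp {s u : ℂ → ℂ} {w : ℂ} (hs : DifferentiableAt ℂ s w)
    (hu : DifferentiableAt ℝ u w) :
    wdzbar (fun z => s z * exp (u z)) w = s w * exp (u w) * wdzbar u w := by
  have h1 : HasFDerivAt s ((fderiv ℂ s w).restrictScalars ℝ) w :=
    hs.hasFDerivAt.restrictScalars ℝ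
  have h2 : HasFDerivAt (fun z => s z * exp (u z)) _ w := h1.mul hu.hasFDerivAt.cexp
  have h3 : fderiv ℂ s w I = I * fderiv ℂ s w 1 := by
    simp
  unfold wdzbar
  rw [h2.fderiv]
  simp only [add_apply, smul_apply, smul_eq_mul,
    ContinuousLinearMap.coe_restrictScalars', h3]
  linear_combination (exp (u w) * fderiv ℂ s w 1 / 2) * I_sq

/-- Chain rule for `∂/∂w̄` of a real function of `h`. -/
lemma wdzbar_ofReal_comp {f : ℂ → ℝ} {h : ℂ → ℂ} {w : ℂ} (hf : DifferentiableAt ℝ f (h w))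
    (hh : DifferentiableAt ℝ h w) :
    wdzbar (fun z => ((f (h z) : ℝ) : ℂ)) w
      = wdzR f (h w) * wdzbar h w
        + wdzbarR f (h w) * wdzbar (fun z => (starRingEnd ℂ) (h z)) w := by
  have h1 : HasFDerivAt (fun z => ((f (h z) : ℝ) : ℂ))
      (ofRealCLM.comp ((fderiv ℝ f (h w)).comp (fderiv ℝ h w))) w :=
    ofRealCLM.hasFDerivAt.comp w (hf.hasFDerivAt.comp w hh.hasFDerivAt)
  have h2 : HasFDerivAt (fun z => (starRingEnd ℂ) (h z))
      ((conjCLE : ℂ →L[ℝ] ℂ).comp (fderiv ℝ h w)) w :=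
    (conjCLE : ℂ →L[ℝ] ℂ).hasFDerivAt.comp w hh.hasFDerivAt
  have h3 : ∀ a : ℂ, fderiv ℝ f (h w) a
      = a.re * fderiv ℝ f (h w) 1 + a.im * fderiv ℝ f (h w) I := by
    intro a
    have : a = a.re • (1 : ℂ) + a.im • I := by simp [re_add_im]
    conv_lhs => rw [this]
    rw [map_add, map_smul, map_smul, smul_eq_mul, smul_eq_mul]
  unfold wdzbar wdzR wdzbarR
  rw [h1.fderiv, h2.fderiv]
  simp only [ContinuousLinearMap.comp_apply, ofRealCLM_apply, ContinuousLinearEquiv.coe_coe,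
    conjCLE_apply]
  rw [h3 (fderiv ℝ h w 1), h3 (fderiv ℝ h w I)]
  apply Complex.ext <;> simp <;> ring


/-- Cauchy-type equation: for `h` harmonic into `(U, σ²|dz|²)` with
`h_w = √φ e^{ω+iψ}/σ(h)` and `h̄_w = conj(√φ) e^{-ω+iψ}/σ(h)`,
`(ω + iψ)_w̄ = (log σ)_z̄(h)·(h̄)_w̄ - (log σ)_z(h)·h_w̄`. -/
theorem stmt14 (Ω : Set ℂ) (hΩ : IsOpen Ω)
    (σ : ℂ → ℝ) (hσ : ContDiff ℝ (⊤ : ℕ∞) σ) (hσpos : ∀ z, 0 < σ z)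
    (h : ℂ → ℂ) (hh : ContDiff ℝ (⊤ : ℕ∞) h)
    (φ s : ℂ → ℂ) (ω ψ : ℂ → ℝ) (hω : ContDiff ℝ (⊤ : ℕ∞) ω) (hψ : ContDiff ℝ (⊤ : ℕ∞) ψ)
    (hφ : DifferentiableOn ℂ φ Ω) (hφne : ∀ w ∈ Ω, φ w ≠ 0)
    (hs : DifferentiableOn ℂ s Ω) (hs2 : ∀ w ∈ Ω, (s w)^2 = φ w)
    (hrep1 : ∀ w ∈ Ω,
      wdz h w = s w * Complex.exp ((ω w : ℂ) + Complex.I * (ψ w : ℂ)) / (σ (h w) : ℂ))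
    (hrep2 : ∀ w ∈ Ω,
      wdz (fun z => (starRingEnd ℂ) (h z)) w
        = (starRingEnd ℂ) (s w) * Complex.exp (-(ω w : ℂ) + Complex.I * (ψ w : ℂ))
            / (σ (h w) : ℂ))
    (hharm : ∀ w ∈ Ω,
      wdzbar (fun z => wdz h z) w
        + 2 * wdzR (fun z => Real.log (σ z)) (h w) * wdz h w * wdzbar h w = 0) :
    ∀ w ∈ Ω,
      wdzbar (fun z => ((ω z : ℂ) + Complex.I * (ψ z : ℂ))) w
        = wdzbarR (fun z => Real.log (σ z)) (h w)
              * wdzbar (fun z => (starRingEnd ℂ) (h z)) w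
          - wdzR (fun z => Real.log (σ z)) (h w) * wdzbar h w := by
  intro w hw
  have hLd : Differentiable ℝ (fun z => Real.log (σ z)) := fun z =>
    (hσ.differentiable (by simp) z).log (hσpos z).ne'
  have hhd : Differentiable ℝ h := hh.differentiable (by simp)
  have hωd : Differentiable ℝ ω := hω.differentiable (by simp)
  have hψd : Differentiable ℝ ψ := hψ.differentiable (by simp)
  have hud : DifferentiableAt ℝ (fun z => (ω z : ℂ) + I * (ψ z : ℂ)) w :=
    (ofRealCLM.differentiableAt.comp w (hωd w)).add
      ((ofRealCLM.differentiableAt.comp w (hψd w)).const_mul I)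
  have hld : DifferentiableAt ℝ (fun z => ((Real.log (σ (h z)) : ℝ) : ℂ)) w :=
    ofRealCLM.differentiableAt.comp w ((hLd (h w)).comp w (hhd w))
  -- Writing `1 / σ(h) = e^{-log σ(h)}` puts `h_w` in the form `s e^u`.
  have hrep : ∀ z ∈ Ω, wdz h z
      = s z * exp (((ω z : ℂ) + I * (ψ z : ℂ)) - ((Real.log (σ (h z)) : ℝ) : ℂ)) := by
    intro z hz
    rw [hrep1 z hz, exp_sub, ← ofReal_exp, Real.exp_log (hσpos _), mul_div_assoc]
  have hev : (fun z => wdz h z) =ᶠ[nhds w] fun z =>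
      s z * exp (((ω z : ℂ) + I * (ψ z : ℂ)) - ((Real.log (σ (h z)) : ℝ) : ℂ)) := by
    filter_upwards [hΩ.mem_nhds hw] with z hz using hrep z hz
  have key : wdzbar (fun z => wdz h z) w
      = wdz h w * (wdzbar (fun z => (ω z : ℂ) + I * (ψ z : ℂ)) w
        - wdzbar (fun z => ((Real.log (σ (h z)) : ℝ) : ℂ)) w) := by
    have h1 : wdzbar (fun z => wdz h z) w = wdzbar (fun z =>
        s z * exp (((ω z : ℂ) + I * (ψ z : ℂ)) - ((Real.log (σ (h z)) : ℝ) : ℂ))) w := by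
      unfold wdzbar
      rw [hev.fderiv_eq]
    rw [h1, wdzbar_mul_exp (hs.differentiableAt (hΩ.mem_nhds hw)) (hud.fun_sub hld), hrep w hw]
    congr 1
    unfold wdzbar
    rw [fderiv_fun_sub hud hld]
    simp only [sub_apply]
    ring
  have hne : wdz h w ≠ 0 := by
    rw [hrep w hw]
    refine mul_ne_zero (fun h0 => hφne w hw ?_) (exp_ne_zero _)
    rw [← hs2 w hw, h0]
    simp
  have hH := hharm w hw
  rw [key, wdzbar_ofReal_comp (f := fun z => Real.log (σ z)) (hLd (h w)) (hhd w)] at hH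
  apply mul_left_cancel₀ hne
  linear_combination hH
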